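/- For all integers r ≥ 1 and k ≥ 1, the k-colour list Ramsey number of the star satisfies (r-1)k + 1 ≤ R_ℓ(K_{1,r}, k). -/

import Mathlib

/-- The star `K_{1,r}` with centre `0` and `r` leaves. -/
def starGraph (r : ℕ) : SimpleGraph (Fin (r + 1)) :=
  SimpleGraph.fromRel (fun a _ => a = 0)

/-- A colouring `c` of the edges of the complete graph on `Fin n` contains a
monochromatic copy of the graph `G`. -/
def HasMonoCopy {α β : Type*} (G : SimpleGraph α) {n : ℕ} (c : Sym2 (Fin n) → β) : Prop :=
  ∃ (f : α → Fin n) (x : β), Function.Injective f ∧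
    ∀ a b, G.Adj a b → c s(f a, f b) = x

/-- The `k`-colour list Ramsey number of a graph `G`: the least `n` for which one can
assign a list of `k` colours to each edge of `K_n` so that every colouring of the edges
from these lists contains a monochromatic copy of `G`. -/
noncomputable def listRamsey {α : Type*} (G : SimpleGraph α) (k : ℕ) : ℕ :=
  sInf { n : ℕ | ∃ L : Sym2 (Fin n) → Finset ℕ,
    (∀ e : Sym2 (Fin n), ¬ e.IsDiag → (L e).card = k) ∧
    ∀ c : Sym2 (Fin n) → ℕ, (∀ e : Sym2 (Fin n), ¬ e.IsDiag → c e ∈ L e) →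
      HasMonoCopy G c }

/-- At the vertex `u < N` of `{0, …, N}`, the edge `uv` is the one forced to carry the label
`N - 1 - 2 * i`. -/
def PeelRel (N ε i u v : ℕ) : Prop :=
  (v < N ∧ u < v ∧ u + v + 2 = 2 * i + ε) ∨
  (v = N ∧ (2 * u + 2 = 2 * i + ε ∨ 2 * u + 1 = 2 * i + ε)) ∨
  (v < u ∧ u + v + 1 = 2 * i + ε) ∨
  (v < N ∧ u < v ∧ u + v + 1 = N + 2 * i + ε) ∨
  (v = N ∧ (2 * u + 1 = N + 2 * i + ε ∨ 2 * u = N + 2 * i + ε)) ∨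
  (v < u ∧ u + v = N + 2 * i + ε)

/-- The range of `i` and `u` in which the label `N - 1 - 2 * i` at `u` is forced. -/
def PeelReg (N ε i u : ℕ) : Prop :=
  N % 2 = 1 ∨ 4 * i + 2 < N ∨ (4 * i + 2 = N ∧ 2 * u + 1 ≤ N + 2 * i + ε) ∨
    (4 * i = N ∧ 2 * u + 2 ≤ 2 * i + ε)

theorem PeelRel.unique {N ε i u v w : ℕ} (hu : u < N)
    (h : PeelRel N ε i u v) (h' : PeelRel N ε i u w) : v = w := by
  unfold PeelRel at h h'
  rcases h with h | h | h | h | h | h <;> rcases h' with h' | h' | h' | h' | h' | h' <;> omega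

set_option maxHeartbeats 4000000 in
/-- If the two labels of every edge have the prescribed sums and the labels at each vertex are
distinct, then the labels `N - 1`, `N - 3`, … are forced, in this order, on the edges given by
`PeelRel`. The parameter `ε` covers the vertex reversal of the system of sums for `ε = 0`. -/
theorem peel {N ε : ℕ} (hε : ε ≤ 1) {σ : ℕ → ℕ → ℕ}
    (hlow : ∀ u v, u ≠ v → u < N → v < N → u + v + 2 ≤ N + ε → σ u v + σ v u + 2 = N)
    (hhigh : ∀ u v, u ≠ v → u < N → v < N → N + ε < u + v + 2 → σ u v + σ v u = N)
    (hzl : ∀ u, u < N → 2 * u + 2 ≤ N + ε → σ u N + σ N u + 2 = N + ε)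
    (hzh : ∀ u, u < N → N + ε < 2 * u + 2 → σ u N + σ N u + 1 = N + ε)
    (hinj : ∀ u v w, u ≤ N → v ≤ N → w ≤ N → v ≠ u → w ≠ u → σ u v = σ u w → v = w)
    (hsurj : ∀ u a, u < N → a < N → ∃ v ≤ N, v ≠ u ∧ σ u v = a) :
    ∀ i u v, 2 * i + 1 ≤ N → u < N → PeelReg N ε i u → PeelRel N ε i u v →
      σ u v + 2 * i + 1 = N := by
  intro i
  induction i using Nat.strong_induction_on with
  | _ i IHi =>
  intro u
  induction u using Nat.strong_induction_on with
  | _ u IHu =>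
  intro v hi hu hreg hrel
  obtain ⟨w, hwN, hwu, hw⟩ := hsurj u (N - 1 - 2 * i) hu (by omega)
  by_cases hwv : w = v
  · subst hwv; omega
  exfalso
  have IH : ∀ j x y, x < N → (j < i ∨ (j = i ∧ x < u)) → PeelReg N ε j x → PeelRel N ε j x y →
      σ x y + 2 * j + 1 = N := by
    intro j x y hx hlt h1 h2
    rcases hlt with h | ⟨rfl, h⟩
    · exact IHi j h x y (by omega) hx h1 h2
    · exact IHu x h y hi hx h1 h2
  clear IHi IHu
  have cell_u : ∀ j, j < i → PeelReg N ε j u → PeelRel N ε j u w → False := by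
    intro j hj h1 h2
    have := IH j u w hu (Or.inl hj) h1 h2
    omega
  have cell_w : ∀ j, w < N → (j < i ∨ (j = i ∧ w < u)) → PeelReg N ε j w → PeelRel N ε j w u →
      σ w u + 2 * j + 1 = N := fun j hw' hlt h1 h2 => IH j w u hw' hlt h1 h2
  have val : ∀ x, x < N → x ≠ u → x ≠ w → σ w x ≠ σ w u := by
    intro x hx hxu hxw h
    exact hxu (hinj w x u hwN (by omega) (by omega) hxw (by omega) h)
  have hne : ¬ PeelRel N ε i u w := fun h => hwv (h.unique hu hrel)
  clear hrel hwv v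
  unfold PeelReg at hreg
  rcases Nat.lt_or_ge w N with hwlt | hwge
  · by_cases hT : u + w + 2 ≤ N + ε
    · have hs := hlow u w (by omega) hu hwlt hT
      obtain ⟨j, hj⟩ : ∃ j, u + w + 2 = 2 * j + ε ∨ u + w + 1 = 2 * j + ε :=
        ⟨(u + w + 2 - ε) / 2, by omega⟩
      have prev : 2 * i + ε ≤ w + 1 → False := by
        intro hw2
        by_cases h2 : N + 2 * i + ε < 2 * w + 3
        · have h3 := IH (i - 1) (N + 2 * i + ε - 3 - w) w (by omega) (by omega)
              (by unfold PeelReg; omega) (by unfold PeelRel; omega)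
          have h4 := hhigh (N + 2 * i + ε - 3 - w) w (by omega) (by omega) hwlt (by omega)
          exact val (N + 2 * i + ε - 3 - w) (by omega) (by omega) (by omega) (by omega)
        · have h3 := IH (i - 1) (N + 2 * i + ε - 2 - w) w (by omega) (by omega)
              (by unfold PeelReg; omega) (by unfold PeelRel; omega)
          have h4 := hhigh (N + 2 * i + ε - 2 - w) w (by omega) (by omega) hwlt (by omega)
          exact val (N + 2 * i + ε - 2 - w) (by omega) (by omega) (by omega) (by omega)
      rcases Nat.lt_trichotomy j i with hji | rfl | hji
      · rcases (by omega : (u < w ∧ u + w + 2 = 2 * j + ε) ∨ (w < u ∧ u + w + 1 = 2 * j + ε) ∨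
          (w < u ∧ u + w + 2 = 2 * j + ε) ∨ (u < w ∧ u + w + 1 = 2 * j + ε)) with h | h | h | h
        · exact cell_u j hji (by unfold PeelReg; omega) (by unfold PeelRel; omega)
        · exact cell_u j hji (by unfold PeelReg; omega) (by unfold PeelRel; omega)
        · have := cell_w j hwlt (Or.inl hji) (by unfold PeelReg; omega) (by unfold PeelRel; omega)
          omega
        · have := cell_w j hwlt (Or.inl hji) (by unfold PeelReg; omega) (by unfold PeelRel; omega)
          omega
      · rcases (by omega : (u < w ∧ u + w + 2 = 2 * j + ε) ∨ (w < u ∧ u + w + 1 = 2 * j + ε) ∨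
          (w < u ∧ u + w + 2 = 2 * j + ε) ∨ (u < w ∧ u + w + 1 = 2 * j + ε)) with h | h | h | h
        · exact hne (by unfold PeelRel; omega)
        · exact hne (by unfold PeelRel; omega)
        · have := cell_w j hwlt (Or.inr ⟨rfl, h.1⟩)
              (by unfold PeelReg; omega) (by unfold PeelRel; omega)
          omega
        · rcases Nat.eq_zero_or_pos u with rfl | hu0
          · exact prev (by omega)
          · have h3 := IH j (u - 1) w (by omega) (by omega)
                (by unfold PeelReg; omega) (by unfold PeelRel; omega)
            have h4 := hlow (u - 1) w (by omega) (by omega) hwlt (by omega)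
            exact val (u - 1) (by omega) (by omega) (by omega) (by omega)
      · by_cases hw1 : 2 * i + ε ≤ w + 1
        · exact prev hw1
        · by_cases h2 : 2 * w + 1 < 2 * i + ε
          · have h3 := IH i (2 * i + ε - 1 - w) w (by omega) (by omega)
                (by unfold PeelReg; omega) (by unfold PeelRel; omega)
            have h4 := hlow (2 * i + ε - 1 - w) w (by omega) (by omega) hwlt (by omega)
            exact val (2 * i + ε - 1 - w) (by omega) (by omega) (by omega) (by omega)
          · have h3 := IH i (2 * i + ε - 2 - w) w (by omega) (by omega)
                (by unfold PeelReg; omega) (by unfold PeelRel; omega)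
            have h4 := hlow (2 * i + ε - 2 - w) w (by omega) (by omega) hwlt (by omega)
            exact val (2 * i + ε - 2 - w) (by omega) (by omega) (by omega) (by omega)
    · have hs := hhigh u w (by omega) hu hwlt (by omega)
      obtain ⟨j, hj⟩ : ∃ j, u + w + 1 = N + 2 * j + ε ∨ u + w = N + 2 * j + ε :=
        ⟨(u + w + 1 - N - ε) / 2, by omega⟩
      rcases Nat.lt_trichotomy j i with hji | rfl | hji
      · rcases (by omega : (u < w ∧ u + w + 1 = N + 2 * j + ε) ∨ (w < u ∧ u + w = N + 2 * j + ε) ∨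
          (w < u ∧ u + w + 1 = N + 2 * j + ε) ∨ (u < w ∧ u + w = N + 2 * j + ε))
          with h | h | h | h
        · exact cell_u j hji (by unfold PeelReg; omega) (by unfold PeelRel; omega)
        · exact cell_u j hji (by unfold PeelReg; omega) (by unfold PeelRel; omega)
        · have := cell_w j hwlt (Or.inl hji) (by unfold PeelReg; omega) (by unfold PeelRel; omega)
          omega
        · have := cell_w j hwlt (Or.inl hji) (by unfold PeelReg; omega) (by unfold PeelRel; omega)
          omega
      · rcases (by omega : (u < w ∧ u + w + 1 = N + 2 * j + ε) ∨ (w < u ∧ u + w = N + 2 * j + ε) ∨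
          (w < u ∧ u + w + 1 = N + 2 * j + ε) ∨ (u < w ∧ u + w = N + 2 * j + ε))
          with h | h | h | h
        · exact hne (by unfold PeelRel; omega)
        · exact hne (by unfold PeelRel; omega)
        · have := cell_w j hwlt (Or.inr ⟨rfl, h.1⟩)
              (by unfold PeelReg; omega) (by unfold PeelRel; omega)
          omega
        · have h3 := IH j (u - 1) w (by omega) (by omega)
              (by unfold PeelReg; omega) (by unfold PeelRel; omega)
          have h4 := hhigh (u - 1) w (by omega) (by omega) hwlt (by omega)
          exact val (u - 1) (by omega) (by omega) (by omega) (by omega)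
      · by_cases h2 : N + 2 * i + ε < 2 * w + 1
        · have h3 := IH i (N + 2 * i + ε - 1 - w) w (by omega) (by omega)
              (by unfold PeelReg; omega) (by unfold PeelRel; omega)
          have h4 := hhigh (N + 2 * i + ε - 1 - w) w (by omega) (by omega) hwlt (by omega)
          exact val (N + 2 * i + ε - 1 - w) (by omega) (by omega) (by omega) (by omega)
        · have h3 := IH i (N + 2 * i + ε - w) w (by omega) (by omega)
              (by unfold PeelReg; omega) (by unfold PeelRel; omega)
          have h4 := hhigh (N + 2 * i + ε - w) w (by omega) (by omega) hwlt (by omega)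
          exact val (N + 2 * i + ε - w) (by omega) (by omega) (by omega) (by omega)
  · obtain rfl : w = N := by omega
    by_cases hT : 2 * u + 2 ≤ w + ε
    · have hs := hzl u hu hT
      rcases (by omega : (2 * u + 2 < 2 * i + ε) ∨ (2 * u + 2 = 2 * i + ε ∨ 2 * u + 1 = 2 * i + ε) ∨
        2 * i + ε < 2 * u + 1) with h | h | h
      · exact cell_u (u + 1 - ε) (by omega) (by unfold PeelReg; omega) (by unfold PeelRel; omega)
      · exact hne (by unfold PeelRel; omega)
      · have h3 := IH i (i + ε - 1) w (by omega) (by omega)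
            (by unfold PeelReg; omega) (by unfold PeelRel; omega)
        have h4 := hzl (i + ε - 1) (by omega) (by omega)
        exact val (i + ε - 1) (by omega) (by omega) (by omega) (by omega)
    · have hs := hzh u hu (by omega)
      rcases (by omega : (2 * u + 1 < w + 2 * i + ε) ∨
        (2 * u + 1 = w + 2 * i + ε ∨ 2 * u = w + 2 * i + ε) ∨ w + 2 * i + ε < 2 * u) with h | h | h
      · exact cell_u ((2 * u + 1 - w - ε) / 2) (by omega)
            (by unfold PeelReg; omega) (by unfold PeelRel; omega)
      · exact hne (by unfold PeelRel; omega)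
      · have h3 := IH i ((w + 2 * i + ε) / 2) w (by omega) (by omega)
            (by unfold PeelReg; omega) (by unfold PeelRel; omega)
        have h4 := hzh ((w + 2 * i + ε) / 2) (by omega) (by omega)
        exact val ((w + 2 * i + ε) / 2) (by omega) (by omega) (by omega) (by omega)

/-- Each row `σ u` numbers the vertices `v ≠ u` of `{0, …, N}` by `0, …, N - 1`. -/
structure IsNumbering (N : ℕ) (σ : ℕ → ℕ → ℕ) : Prop where
  lt : ∀ u v, u ≤ N → v ≤ N → v ≠ u → σ u v < N
  inj : ∀ u v w, u ≤ N → v ≤ N → w ≤ N → v ≠ u → w ≠ u → σ u v = σ u w → v = w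

theorem IsNumbering.surj {N : ℕ} {σ : ℕ → ℕ → ℕ} (h : IsNumbering N σ) (u a : ℕ) (hu : u ≤ N)
    (ha : a < N) : ∃ v ≤ N, v ≠ u ∧ σ u v = a := by
  have key : ((Finset.range (N + 1)).erase u).image (σ u) = Finset.range N := by
    apply Finset.eq_of_subset_of_card_le
    · intro x hx
      simp only [Finset.mem_image, Finset.mem_erase, Finset.mem_range] at hx ⊢
      obtain ⟨v, ⟨hv, hv'⟩, rfl⟩ := hx
      exact h.lt u v hu (by omega) hv
    · rw [Finset.card_image_of_injOn, Finset.card_erase_of_mem] <;> simp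
      · omega
      · intro v hv w hw hvw
        simp at hv hw
        exact h.inj u v w hu (by omega) (by omega) hv.2 hw.2 hvw
  have : a ∈ ((Finset.range (N + 1)).erase u).image (σ u) := by simp [key, ha]
  simp only [Finset.mem_image, Finset.mem_erase, Finset.mem_range] at this
  obtain ⟨v, ⟨hv, hv'⟩, hva⟩ := this
  exact ⟨v, by omega, hv, hva⟩

/-- The exponent of the edge `uv` in the distinguished monomial; the last vertex is `N`. -/
def edgeExp (N u v : ℕ) : ℕ :=
  if u = N then (if N ≤ 2 * v + 1 then N - 1 else N - 2)
  else if v = N then (if N ≤ 2 * u + 1 then N - 1 else N - 2)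
  else if N ≤ u + v + 1 then N else N - 2

/-- A numbering in which the two labels of each edge add up to `edgeExp`. -/
structure IsArrangement (N : ℕ) (σ : ℕ → ℕ → ℕ) : Prop extends IsNumbering N σ where
  sum : ∀ u v, u ≤ N → v ≤ N → v ≠ u → σ u v + σ v u = edgeExp N u v

theorem IsArrangement.pivot_odd {N : ℕ} {σ : ℕ → ℕ → ℕ} (h : IsArrangement N σ) {i u v : ℕ}
    (hi : 2 * i + 1 ≤ N) (hu : u < N) (hreg : PeelReg N 0 i u) (hrel : PeelRel N 0 i u v) :
    σ u v + 2 * i + 1 = N := by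
  refine peel (ε := 0) (by omega) ?_ ?_ ?_ ?_ h.inj (fun u a hu ha => h.surj u a hu.le ha)
    i u v hi hu hreg hrel
  · intro u v huv hu hv hT
    have := h.sum u v hu.le hv.le huv.symm
    unfold edgeExp at this; split_ifs at this <;> omega
  · intro u v huv hu hv hT
    have := h.sum u v hu.le hv.le huv.symm
    unfold edgeExp at this; split_ifs at this <;> omega
  · intro u hu hT
    have := h.sum u N hu.le le_rfl hu.ne'
    unfold edgeExp at this; split_ifs at this <;> omega
  · intro u hu hT
    have := h.sum u N hu.le le_rfl hu.ne'
    unfold edgeExp at this; split_ifs at this <;> omega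

/-- Reversal of the vertices below `N`, fixing `N`. -/
def vrev (N u : ℕ) : ℕ := if u < N then N - 1 - u else u

theorem vrev_of_lt {N u : ℕ} (h : u < N) : vrev N u = N - 1 - u := if_pos h
theorem vrev_self (N : ℕ) : vrev N N = N := if_neg (lt_irrefl N)

theorem vrev_le {N u : ℕ} (h : u ≤ N) : vrev N u ≤ N := by
  unfold vrev; split_ifs <;> omega

theorem vrev_inj {N u v : ℕ} (hu : u ≤ N) (hv : v ≤ N) (h : vrev N u = vrev N v) : u = v := by
  unfold vrev at h; split_ifs at h <;> omega

theorem vrev_vrev (N u : ℕ) : vrev N (vrev N u) = u := by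
  unfold vrev; split_ifs <;> omega

theorem IsArrangement.pivot_even {N : ℕ} {σ : ℕ → ℕ → ℕ} (h : IsArrangement N σ) {i u v : ℕ}
    (hi : 2 * i + 1 ≤ N) (hu : u < N) (hv : v ≤ N) (hvu : v ≠ u)
    (hreg : PeelReg N 1 i (vrev N u)) (hrel : PeelRel N 1 i (vrev N u) (vrev N v)) :
    σ u v = 2 * i := by
  have hne : ∀ {u v}, u ≤ N → v ≤ N → v ≠ u → vrev N v ≠ vrev N u :=
    fun hu hv hvu e => hvu (vrev_inj hv hu e)
  have hlt : ∀ {u v}, u ≤ N → v ≤ N → v ≠ u → σ (vrev N u) (vrev N v) < N :=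
    fun hu hv hvu => h.lt _ _ (vrev_le hu) (vrev_le hv) (hne hu hv hvu)
  have hsum : ∀ {u v}, u ≤ N → v ≤ N → v ≠ u → σ (vrev N u) (vrev N v) +
      σ (vrev N v) (vrev N u) = edgeExp N (vrev N u) (vrev N v) :=
    fun hu hv hvu => h.sum _ _ (vrev_le hu) (vrev_le hv) (hne hu hv hvu)
  have key := peel (N := N) (ε := 1) le_rfl
    (σ := fun u v => N - 1 - σ (vrev N u) (vrev N v)) ?_ ?_ ?_ ?_ ?_ ?_ i (vrev N u) (vrev N v) hi
    (by rw [vrev_of_lt hu]; omega) hreg hrel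
  · simp only [vrev_vrev] at key
    have := h.lt u v hu.le hv hvu
    omega
  · intro u v huv hu hv hT
    have h1 := hsum hu.le hv.le huv.symm
    have h2 := hlt hu.le hv.le huv.symm
    have h3 := hlt hv.le hu.le huv
    rw [vrev_of_lt hu, vrev_of_lt hv] at *
    unfold edgeExp at h1; split_ifs at h1 <;> omega
  · intro u v huv hu hv hT
    have h1 := hsum hu.le hv.le huv.symm
    have h2 := hlt hu.le hv.le huv.symm
    have h3 := hlt hv.le hu.le huv
    rw [vrev_of_lt hu, vrev_of_lt hv] at *
    unfold edgeExp at h1; split_ifs at h1 <;> omega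
  · intro u hu hT
    have h1 := hsum hu.le le_rfl hu.ne'
    have h2 := hlt hu.le le_rfl hu.ne'
    have h3 := hlt le_rfl hu.le hu.ne
    rw [vrev_of_lt hu, vrev_self] at *
    unfold edgeExp at h1; split_ifs at h1 <;> omega
  · intro u hu hT
    have h1 := hsum hu.le le_rfl hu.ne'
    have h2 := hlt hu.le le_rfl hu.ne'
    have h3 := hlt le_rfl hu.le hu.ne
    rw [vrev_of_lt hu, vrev_self] at *
    unfold edgeExp at h1; split_ifs at h1 <;> omega
  · intro u v w hu hv hw hvu hwu e
    have h2 := hlt hu hv hvu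
    have h3 := hlt hu hw hwu
    exact vrev_inj hv hw (h.inj _ _ _ (vrev_le hu) (vrev_le hv) (vrev_le hw) (hne hu hv hvu)
      (hne hu hw hwu) (by omega))
  · intro u a hu ha
    obtain ⟨v, hv, hvu, hva⟩ := h.surj (vrev N u) (N - 1 - a) (vrev_le hu.le) (by omega)
    refine ⟨vrev N v, vrev_le hv, fun e => hvu ?_, ?_⟩
    · rw [← e, vrev_vrev]
    · rw [vrev_vrev]; omega

set_option maxHeartbeats 4000000 in
theorem IsArrangement.unique {N : ℕ} {σ τ : ℕ → ℕ → ℕ} (hσ : IsArrangement N σ)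
    (hτ : IsArrangement N τ) {u v : ℕ} (hu : u ≤ N) (hv : v ≤ N) (hvu : v ≠ u) :
    σ u v = τ u v := by
  wlog huv : u < v generalizing u v with H
  · have h1 := H hv hu hvu.symm (by omega)
    have h2 := hσ.sum v u hv hu hvu.symm
    have h3 := hτ.sum v u hv hu hvu.symm
    omega
  have hs : σ u v + σ v u = τ u v + τ v u := by
    rw [hσ.sum u v hu hv hvu, hτ.sum u v hu hv hvu]
  have odd1 : ∀ i, 2 * i + 1 ≤ N → PeelReg N 0 i u → PeelRel N 0 i u v → σ u v = τ u v := by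
    intro i hi h1 h2
    have := hσ.pivot_odd hi (by omega) h1 h2
    have := hτ.pivot_odd hi (by omega) h1 h2
    omega
  have odd2 : ∀ i, 2 * i + 1 ≤ N → v < N → PeelReg N 0 i v → PeelRel N 0 i v u →
      σ u v = τ u v := by
    intro i hi hv h1 h2
    have := hσ.pivot_odd hi hv h1 h2
    have := hτ.pivot_odd hi hv h1 h2
    omega
  have even1 : ∀ i, 2 * i + 1 ≤ N → PeelReg N 1 i (vrev N u) →
      PeelRel N 1 i (vrev N u) (vrev N v) → σ u v = τ u v := by
    intro i hi h1 h2
    rw [hσ.pivot_even hi (by omega) hv hvu h1 h2, hτ.pivot_even hi (by omega) hv hvu h1 h2]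
  have even2 : ∀ i, 2 * i + 1 ≤ N → v < N → PeelReg N 1 i (vrev N v) →
      PeelRel N 1 i (vrev N v) (vrev N u) → σ u v = τ u v := by
    intro i hi hv h1 h2
    have := hσ.pivot_even hi hv hu hvu.symm h1 h2
    have := hτ.pivot_even hi hv hu hvu.symm h1 h2
    omega
  unfold PeelReg PeelRel at *
  rw [vrev_of_lt (by omega : u < N)] at *
  rcases hv.lt_or_eq with hv | rfl
  · rw [vrev_of_lt hv] at *
    by_cases hT : u + v + 2 ≤ N
    · by_cases hH : N % 2 = 1 ∨ 2 * (u + v) + 4 ≤ N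
      · rcases Nat.mod_two_eq_zero_or_one (u + v) with hp | hp
        · exact odd1 ((u + v) / 2 + 1) (by omega) (by omega) (by omega)
        · exact odd2 ((u + v) / 2 + 1) (by omega) hv (by omega) (by omega)
      · rcases Nat.mod_two_eq_zero_or_one (u + v) with hp | hp
        · exact even2 ((N - 2 - (u + v)) / 2) (by omega) hv (by omega) (by omega)
        · exact even1 ((N - 2 - (u + v)) / 2) (by omega) (by omega) (by omega)
    · by_cases hH : N % 2 = 1 ∨ 2 * (u + v) + 4 ≤ 3 * N
      · rcases Nat.mod_two_eq_zero_or_one (u + v + 1 - N) with hp | hp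
        · exact odd1 ((u + v + 1 - N) / 2) (by omega) (by omega) (by omega)
        · exact odd2 ((u + v + 1 - N) / 2) (by omega) hv (by omega) (by omega)
      · rcases Nat.mod_two_eq_zero_or_one (u + v) with hp | hp
        · exact even1 ((2 * N - 1 - (u + v)) / 2) (by omega) (by omega) (by omega)
        · exact even2 ((2 * N - 1 - (u + v)) / 2) (by omega) hv (by omega) (by omega)
  · rw [vrev_self] at *
    by_cases hT : 2 * u + 2 ≤ v
    · by_cases hH : v % 2 = 1 ∨ 4 * u + 4 ≤ v
      · exact odd1 (u + 1) (by omega) (by omega) (by omega)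
      · exact even1 ((v - 2 - 2 * u) / 2) (by omega) (by omega) (by omega)
    · by_cases hH : v % 2 = 1 ∨ 4 * u + 4 ≤ 3 * v
      · exact odd1 ((2 * u + 1 - v) / 2) (by omega) (by omega) (by omega)
      · exact even1 ((2 * v - 1 - 2 * u) / 2) (by omega) (by omega) (by omega)

/-- The label at the smaller endpoint of an edge of `{0, …, N - 1}` with endpoint sum `T`. -/
def lowerLabel (N T : ℕ) : ℕ :=
  if T + 2 ≤ N then
    if T % 2 = (if 2 * T + 4 ≤ N then 1 else N % 2) then T else N - 3 - T
  else
    if T % 2 = (if 2 * T + 4 ≤ 3 * N then N % 2 else 1) then T + 1 - N else 2 * N - 2 - T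

/-- The label at `u` of the edge joining `u < N` to the vertex `N`. -/
def lastLabel (N u : ℕ) : ℕ :=
  if 2 * u + 2 ≤ N then
    if N % 2 = 1 ∨ 4 * u + 4 ≤ N then N - 3 - 2 * u else N - 2 - 2 * u
  else
    if N % 2 = 0 ∧ 4 * u + 4 ≤ 3 * N then 2 * N - 1 - 2 * u else 2 * N - 2 - 2 * u

/-- An explicit arrangement. -/
def arrangement (N u v : ℕ) : ℕ :=
  if u = N then edgeExp N u v - lastLabel N v
  else if v = N then lastLabel N u
  else if u < v then lowerLabel N (u + v)
  else edgeExp N u v - lowerLabel N (u + v)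

theorem edgeExp_of_lt {N u v : ℕ} (hu : u < N) (hv : v < N) :
    edgeExp N u v = if N ≤ u + v + 1 then N else N - 2 := by
  rw [edgeExp, if_neg hu.ne, if_neg hv.ne]

theorem lowerLabel_injOn {N u v w : ℕ} (huv : u < v) (hv : v < N) (huw : u < w) (hw : w < N)
    (h : lowerLabel N (u + v) = lowerLabel N (u + w)) : v = w := by
  unfold lowerLabel at h
  split_ifs at h <;> omega

theorem upperLabel_injOn {N u v w : ℕ} (hu : u < N) (hv : v < u) (hw : w < u)
    (h : edgeExp N u v - lowerLabel N (u + v) = edgeExp N u w - lowerLabel N (u + w)) :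
    v = w := by
  rw [edgeExp_of_lt hu (hv.trans hu), edgeExp_of_lt hu (hw.trans hu)] at h
  unfold lowerLabel at h
  split_ifs at h <;> omega

theorem upperLabel_ne_lowerLabel {N u v w : ℕ} (hu : u < N) (hv : v < u) (huw : u < w)
    (hw : w < N) : edgeExp N u v - lowerLabel N (u + v) ≠ lowerLabel N (u + w) := by
  rw [edgeExp_of_lt hu (hv.trans hu)]
  unfold lowerLabel
  split_ifs <;> omega

theorem lowerLabel_ne_lastLabel {N u w : ℕ} (huw : u < w) (hw : w < N) :
    lowerLabel N (u + w) ≠ lastLabel N u := by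
  unfold lowerLabel lastLabel
  split_ifs <;> omega

theorem upperLabel_ne_lastLabel {N u v : ℕ} (hu : u < N) (hv : v < u) :
    edgeExp N u v - lowerLabel N (u + v) ≠ lastLabel N u := by
  rw [edgeExp_of_lt hu (hv.trans hu)]
  unfold lowerLabel lastLabel
  split_ifs <;> omega

theorem edgeExp_comm (N u v : ℕ) : edgeExp N u v = edgeExp N v u := by
  unfold edgeExp
  split_ifs <;> omega

theorem edgeExp_le (N u v : ℕ) : edgeExp N u v ≤ N := by
  unfold edgeExp
  split_ifs <;> omega

theorem lowerLabel_le {N u v : ℕ} (huv : u < v) (hv : v < N) :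
    lowerLabel N (u + v) ≤ edgeExp N u v ∧ lowerLabel N (u + v) < N ∧
      edgeExp N u v < N + lowerLabel N (u + v) := by
  rw [edgeExp_of_lt (huv.trans hv) hv]
  unfold lowerLabel
  split_ifs <;> omega

theorem lastLabel_le {N u : ℕ} (hu : u < N) :
    lastLabel N u ≤ edgeExp N u N ∧ lastLabel N u < N ∧ edgeExp N u N < N + lastLabel N u := by
  unfold edgeExp lastLabel
  split_ifs <;> omega

theorem isArrangement_arrangement (N : ℕ) : IsArrangement N (arrangement N) where
  lt u v hu hv hvu := by
    unfold arrangement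
    split_ifs with h1 h2 h3
    · have := lastLabel_le (N := N) (u := v) (by omega)
      rw [edgeExp_comm, h1]; omega
    · exact (lastLabel_le (by omega)).2.1
    · exact (lowerLabel_le h3 (by omega)).2.1
    · have := lowerLabel_le (N := N) (u := v) (v := u) (by omega) (by omega)
      rw [edgeExp_comm, add_comm u v]; omega
  inj u v w hu hv hw hvu hwu h := by
    unfold arrangement at h
    rcases hu.lt_or_eq with hu | rfl
    · rw [if_neg hu.ne, if_neg hu.ne] at h
      rcases hv.lt_or_eq with hv | rfl
      · rw [if_neg hv.ne] at h
        rcases hw.lt_or_eq with hw | rfl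
        · rw [if_neg hw.ne] at h
          split_ifs at h with h1 h2 h2
          · exact lowerLabel_injOn h1 hv h2 hw h
          · exact (upperLabel_ne_lowerLabel hu (by omega) h1 hv h.symm).elim
          · exact (upperLabel_ne_lowerLabel hu (by omega) h2 hw h).elim
          · exact upperLabel_injOn hu (by omega) (by omega) h
        · rw [if_pos rfl] at h
          split_ifs at h with h1
          · exact (lowerLabel_ne_lastLabel h1 hv h).elim
          · exact (upperLabel_ne_lastLabel hu (by omega) h).elim
      · rw [if_pos rfl] at h
        rcases hw.lt_or_eq with hw | rfl
        · rw [if_neg hw.ne] at h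
          split_ifs at h with h1
          · exact (lowerLabel_ne_lastLabel h1 hw h.symm).elim
          · exact (upperLabel_ne_lastLabel hu (by omega) h.symm).elim
        · rfl
    · rw [if_pos rfl, if_pos rfl] at h
      unfold edgeExp lastLabel at h
      rw [if_pos rfl, if_pos rfl] at h
      split_ifs at h <;> omega
  sum u v hu hv hvu := by
    unfold arrangement
    rcases hu.lt_or_eq with hu | rfl
    · rw [if_neg hu.ne, if_neg hu.ne]
      rcases hv.lt_or_eq with hv | rfl
      · rw [if_neg hv.ne, if_neg hv.ne]
        rcases Nat.lt_or_ge u v with h | h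
        · have := lowerLabel_le h hv
          rw [if_pos h, if_neg (by omega), edgeExp_comm N v u, add_comm v u]; omega
        · have := lowerLabel_le (lt_of_le_of_ne h hvu) hu
          rw [if_neg h.not_gt, if_pos (lt_of_le_of_ne h hvu), edgeExp_comm N u v,
            add_comm u v]; omega
      · have := lastLabel_le hu
        rw [if_pos rfl, if_pos rfl, edgeExp_comm v v u]; omega
    · have hv : v < u := by omega
      have := lastLabel_le hv
      rw [edgeExp_comm] at this
      rw [if_pos rfl, if_neg hv.ne, if_pos rfl]; omega

/-- The exponent vector of `∏ X s(v, w) ^ g v w`. -/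
noncomputable def pairExp {V : Type*} [Fintype V] (g : V → V → ℕ) : Sym2 V →₀ ℕ :=
  ∑ v, ∑ w, Finsupp.single s(v, w) (g v w)

theorem pairExp_apply {V : Type*} [Fintype V] (g : V → V → ℕ) {a b : V} (hab : a ≠ b) :
    pairExp g s(a, b) = g a b + g b a := by
  classical
  have h : ∀ v w, Finsupp.single s(v, w) (g v w) s(a, b) =
      (if v = a then if w = b then g v w else 0 else 0) +
        (if v = b then if w = a then g v w else 0 else 0) := by
    intro v w
    simp only [Finsupp.single_apply, Sym2.eq_iff]
    by_cases h1 : v = a <;> by_cases h2 : w = b <;> by_cases h3 : v = b <;>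
      by_cases h4 : w = a <;> simp_all
  simp only [pairExp, Finsupp.coe_finsetSum, Finset.sum_apply, h, Finset.sum_add_distrib]
  simp

theorem pairExp_apply_self {V : Type*} [Fintype V] (g : V → V → ℕ) (a : V) :
    pairExp g s(a, a) = g a a := by
  classical
  have h : ∀ v w, Finsupp.single s(v, w) (g v w) s(a, a) =
      (if v = a then if w = a then g v w else 0 else 0) := by
    intro v w
    simp only [Finsupp.single_apply, Sym2.eq_iff]
    by_cases h1 : v = a <;> by_cases h2 : w = a <;> simp_all
  simp only [pairExp, Finsupp.coe_finsetSum, Finset.sum_apply, h]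
  simp

/-- The labelling of ordered pairs given by a permutation at each vertex. -/
def permLabel {N : ℕ} (p : Fin (N + 1) → Equiv.Perm (Fin N)) (v w : Fin (N + 1)) : ℕ :=
  Fin.insertNth (α := fun _ => ℕ) v 0 (fun j => (p v j : ℕ)) w

@[simp] theorem permLabel_self {N : ℕ} (p : Fin (N + 1) → Equiv.Perm (Fin N)) (v : Fin (N + 1)) :
    permLabel p v v = 0 := by
  simp [permLabel]

@[simp] theorem permLabel_succAbove {N : ℕ} (p : Fin (N + 1) → Equiv.Perm (Fin N))
    (v : Fin (N + 1)) (j : Fin N) : permLabel p v (v.succAbove j) = p v j := by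
  simp [permLabel]

theorem pairExp_permLabel {N : ℕ} (p : Fin (N + 1) → Equiv.Perm (Fin N)) :
    pairExp (permLabel p) = ∑ v, ∑ j, Finsupp.single s(v, v.succAbove j) (p v j : ℕ) := by
  refine Finset.sum_congr rfl fun v _ => ?_
  rw [Fin.sum_univ_succAbove _ v]
  simp

/-- `∏ (X s(v, a) - X s(v, b))` over vertices `v` and pairs `a, b` of neighbours of `v`. -/
noncomputable def linePoly (N : ℕ) : MvPolynomial (Sym2 (Fin (N + 1))) ℤ :=
  ∏ v, (Matrix.vandermonde fun j : Fin N => MvPolynomial.X s(v, v.succAbove j)).det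

theorem linePoly_eq_sum (N : ℕ) : linePoly N =
    ∑ p : Fin (N + 1) → Equiv.Perm (Fin N),
      MvPolynomial.monomial (pairExp (permLabel p)) (∏ v, (Equiv.Perm.sign (p v) : ℤ)) := by
  have hdet : ∀ v : Fin (N + 1),
      (Matrix.vandermonde fun j : Fin N =>
        (MvPolynomial.X s(v, v.succAbove j) : MvPolynomial (Sym2 (Fin (N + 1))) ℤ)).det =
      ∑ q : Equiv.Perm (Fin N), MvPolynomial.monomial
        (∑ j, Finsupp.single s(v, v.succAbove j) (q j : ℕ)) (Equiv.Perm.sign q : ℤ) := by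
    intro v
    rw [← Matrix.det_transpose, Matrix.det_apply']
    refine Finset.sum_congr rfl fun q _ => ?_
    rw [MvPolynomial.monomial_sum_index]
    congr 1
    refine Finset.prod_congr rfl fun j _ => ?_
    rw [Matrix.transpose_apply, Matrix.vandermonde_apply, MvPolynomial.X_pow_eq_monomial]
  simp only [linePoly, hdet, Finset.prod_univ_sum, Fintype.piFinset_univ]
  refine Finset.sum_congr rfl fun p _ => ?_
  rw [pairExp_permLabel, MvPolynomial.monomial_sum_prod]

theorem coeff_linePoly_ne_zero {N : ℕ} (p : Fin (N + 1) → Equiv.Perm (Fin N))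
    (hp : ∀ q, pairExp (permLabel q) = pairExp (permLabel p) → q = p) :
    (linePoly N).coeff (pairExp (permLabel p)) ≠ 0 := by
  classical
  rw [linePoly_eq_sum, MvPolynomial.coeff_sum, Finset.sum_eq_single p]
  · rw [MvPolynomial.coeff_monomial, if_pos rfl, Finset.prod_ne_zero_iff]
    intro v _
    exact Units.ne_zero _
  · intro q _ hq
    rw [MvPolynomial.coeff_monomial, if_neg fun h => hq (hp q h)]
  · simp

theorem isHomogeneous_linePoly (N : ℕ) :
    (linePoly N).IsHomogeneous ((N + 1) * ∑ j : Fin N, (j : ℕ)) := by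
  rw [linePoly_eq_sum]
  refine MvPolynomial.IsHomogeneous.sum _ _ _ fun p _ => MvPolynomial.isHomogeneous_monomial _ ?_
  rw [pairExp_permLabel]
  simp only [map_sum, Finsupp.degree_single]
  simp only [Equiv.sum_comp (p _) (fun j : Fin N => (j : ℕ))]
  simp

/-- A numbering, as a permutation at each vertex. -/
noncomputable def IsNumbering.toPerm {N : ℕ} {σ : ℕ → ℕ → ℕ} (h : IsNumbering N σ)
    (v : Fin (N + 1)) : Equiv.Perm (Fin N) :=
  Equiv.ofBijective
    (fun j => ⟨σ v (v.succAbove j), h.lt _ _ (by omega) (by omega)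
      fun e => Fin.succAbove_ne v j (Fin.ext e)⟩)
    (Finite.injective_iff_bijective.1 fun i j hij => Fin.succAbove_right_injective (p := v)
      (Fin.ext (h.inj v _ _ (by omega) (by omega) (by omega)
        (fun e => Fin.succAbove_ne v i (Fin.ext e)) (fun e => Fin.succAbove_ne v j (Fin.ext e))
        (Fin.ext_iff.1 hij))))

theorem IsNumbering.permLabel_toPerm {N : ℕ} {σ : ℕ → ℕ → ℕ} (h : IsNumbering N σ)
    {v w : Fin (N + 1)} (hvw : w ≠ v) : permLabel h.toPerm v w = σ v w := by
  obtain ⟨j, rfl⟩ := Fin.exists_succAbove_eq hvw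
  simp [toPerm]

theorem pairExp_permLabel_inj {N : ℕ} (q : Fin (N + 1) → Equiv.Perm (Fin N))
    (hq : pairExp (permLabel q) =
      pairExp (permLabel (isArrangement_arrangement N).toPerm)) :
    q = (isArrangement_arrangement N).toPerm := by
  set τ := isArrangement_arrangement N
  have hsum : ∀ v w : Fin (N + 1), w ≠ v →
      permLabel q v w + permLabel q w v = edgeExp N v w := by
    intro v w hvw
    rw [← pairExp_apply _ hvw.symm, hq, pairExp_apply _ hvw.symm, τ.permLabel_toPerm hvw,
      τ.permLabel_toPerm hvw.symm, τ.sum _ _ (by omega) (by omega) fun e => hvw (Fin.ext e)]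
  have hval : ∀ {u : ℕ}, u ≤ N → ((Fin.ofNat (N + 1) u : Fin (N + 1)) : ℕ) = u := by
    intro u hu
    simp only [Fin.val_ofNat]
    exact Nat.mod_eq_of_lt (by omega)
  have hne : ∀ {u v : ℕ}, u ≤ N → v ≤ N → v ≠ u → Fin.ofNat (N + 1) v ≠ Fin.ofNat (N + 1) u := by
    intro u v hu hv hvu e
    rw [Fin.ext_iff, hval hu, hval hv] at e
    exact hvu e
  have hσ : IsArrangement N
      (fun u v => permLabel q (Fin.ofNat (N + 1) u) (Fin.ofNat (N + 1) v)) := by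
    refine ⟨⟨fun u v hu hv hvu => ?_, fun u v w hu hv hw hvu hwu h => ?_⟩,
      fun u v hu hv hvu => ?_⟩
    · obtain ⟨j, hj⟩ := Fin.exists_succAbove_eq (hne hu hv hvu)
      rw [← hj, permLabel_succAbove]
      exact (q _ j).2
    · obtain ⟨i, hi⟩ := Fin.exists_succAbove_eq (hne hu hv hvu)
      obtain ⟨j, hj⟩ := Fin.exists_succAbove_eq (hne hu hw hwu)
      rw [← hi, ← hj, permLabel_succAbove, permLabel_succAbove] at h
      have := (q _).injective (Fin.ext h)
      rw [← hval hv, ← hval hw, ← hi, ← hj, this]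
    · rw [hsum _ _ (hne hu hv hvu), hval hu, hval hv]
  funext v
  ext j
  have h := hσ.unique τ (u := v) (v := v.succAbove j) (by omega) (by omega)
    fun e => Fin.succAbove_ne v j (Fin.ext e)
  simp only [Fin.ofNat_eq_cast, Fin.cast_val_eq_self, permLabel_succAbove] at h
  rw [h, ← τ.permLabel_toPerm (Fin.succAbove_ne v j), permLabel_succAbove]

/-- The edges of `K_n` can be properly coloured from lists of `n` colours. -/
theorem exists_proper_list_colouring_complete {n : ℕ} (L : Sym2 (Fin n) → Finset ℕ)
    (hL : ∀ e, ¬ e.IsDiag → n ≤ (L e).card) :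
    ∃ c : Sym2 (Fin n) → ℕ, (∀ e, ¬ e.IsDiag → c e ∈ L e) ∧
      ∀ v a b, a ≠ v → b ≠ v → a ≠ b → c s(v, a) ≠ c s(v, b) := by
  classical
  obtain _ | N := n
  · exact ⟨fun _ => 0, fun e => e.ind fun a => a.elim0, fun v => v.elim0⟩
  set τ := isArrangement_arrangement N
  have hcoeff := coeff_linePoly_ne_zero τ.toPerm pairExp_permLabel_inj
  have hdeg : (linePoly N).totalDegree = (pairExp (permLabel τ.toPerm)).degree := by
    rw [(isHomogeneous_linePoly N).totalDegree (fun h => hcoeff (by rw [h]; simp)),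
      ← (isHomogeneous_linePoly N) hcoeff, Finsupp.degree_eq_weight_one]
    rfl
  obtain ⟨s, hs, hne⟩ := MvPolynomial.combinatorial_nullstellensatz_exists_eval_nonzero
    (linePoly N) _ hcoeff hdeg
    (fun e => if e.IsDiag then {0} else (L e).image (fun x : ℕ => (x : ℤ))) (by
      intro e
      induction e with | _ a b =>
      by_cases hab : a = b
      · subst hab
        simp [pairExp_apply_self]
      · rw [if_neg (by simpa using hab), Finset.card_image_of_injective _ Nat.cast_injective,
          pairExp_apply _ hab, τ.permLabel_toPerm (Ne.symm hab), τ.permLabel_toPerm hab,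
          τ.sum _ _ (by omega) (by omega) fun e => hab (Fin.ext e.symm)]
        exact (Nat.lt_succ_of_le (edgeExp_le _ _ _)).trans_le (hL _ (by simpa using hab)))
  have hmem : ∀ e : Sym2 (Fin (N + 1)), ¬ e.IsDiag → ∃ x ∈ L e, (x : ℤ) = s e := by
    intro e he
    have := hs e
    rw [if_neg he, Finset.mem_image] at this
    exact this
  have hcast : ∀ e : Sym2 (Fin (N + 1)), ¬ e.IsDiag → ((s e).toNat : ℤ) = s e := by
    intro e he
    obtain ⟨x, _, hx⟩ := hmem e he
    rw [← hx, Int.toNat_natCast]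
  refine ⟨fun e => (s e).toNat, fun e he => ?_, fun v a b ha hb hab h => hab ?_⟩
  · obtain ⟨x, hxL, hx⟩ := hmem e he
    dsimp only
    rwa [← hx, Int.toNat_natCast]
  · have hv : (Matrix.vandermonde fun j : Fin N => s s(v, v.succAbove j)).det ≠ 0 := by
      rw [linePoly, map_prod, Finset.prod_ne_zero_iff] at hne
      have := hne v (Finset.mem_univ v)
      rw [Matrix.det_vandermonde] at this ⊢
      simpa [map_prod] using this
    rw [Matrix.det_vandermonde_ne_zero_iff] at hv
    obtain ⟨i, rfl⟩ := Fin.exists_succAbove_eq ha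
    obtain ⟨j, rfl⟩ := Fin.exists_succAbove_eq hb
    congr 1
    apply hv
    have h1 := hcast s(v, v.succAbove i) (by simp)
    have h2 := hcast s(v, v.succAbove j) (by simp)
    dsimp only at h ⊢
    rw [← h1, ← h2, h]

section Galvin

variable {α : Type*} [DecidableEq α] (row col rank : α → ℕ)

/-- `x` precedes `y`: in a common row the larger rank comes first, in a common column the
smaller. -/
def Precedes (x y : α) : Prop :=
  (row x = row y ∧ rank y < rank x) ∨ (col x = col y ∧ rank x < rank y)

theorem exists_kernel (S : Finset α)
    (hrow : ∀ x ∈ S, ∀ y ∈ S, row x = row y → rank x = rank y → x = y)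
    (hcol : ∀ x ∈ S, ∀ y ∈ S, col x = col y → rank x = rank y → x = y) :
    ∃ K ⊆ S, (∀ x ∈ K, ∀ y ∈ K, row x = row y ∨ col x = col y → x = y) ∧
      ∀ y ∈ S, y ∉ K → ∃ x ∈ K, Precedes row col rank x y := by
  classical
  induction S using Finset.strongInduction with
  | _ S ih =>
  by_cases h : ∃ x ∈ S, ∃ y ∈ S, (∀ z ∈ S, row z = row x → rank z ≤ rank x) ∧
      (∀ z ∈ S, row z = row y → rank z ≤ rank y) ∧ col x = col y ∧ rank x < rank y
  · obtain ⟨x, hx, y, hy, hxb, -, hxy, hlt⟩ := h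
    obtain ⟨K, hKS, hind, hK⟩ := ih (S.erase y) (Finset.erase_ssubset hy)
      (fun a ha b hb => hrow a (Finset.mem_of_mem_erase ha) b (Finset.mem_of_mem_erase hb))
      (fun a ha b hb => hcol a (Finset.mem_of_mem_erase ha) b (Finset.mem_of_mem_erase hb))
    refine ⟨K, hKS.trans (Finset.erase_subset _ _), hind, fun w hw hwK => ?_⟩
    by_cases hwy : w = y
    · subst hwy
      by_cases hxK : x ∈ K
      · exact ⟨x, hxK, Or.inr ⟨hxy, hlt⟩⟩
      · obtain ⟨z, hz, hzx⟩ := hK x (Finset.mem_erase.2 ⟨fun e => by simp [e] at hlt, hx⟩) hxK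
        refine ⟨z, hz, Or.inr ?_⟩
        rcases hzx with ⟨h1, h2⟩ | ⟨h1, h2⟩
        · have := hxb z (Finset.mem_of_mem_erase (hKS hz)) h1
          omega
        · exact ⟨h1.trans hxy, h2.trans hlt⟩
    · exact hK w (Finset.mem_erase.2 ⟨hwy, hw⟩) hwK
  · push Not at h
    refine ⟨{x ∈ S | ∀ z ∈ S, row z = row x → rank z ≤ rank x}, Finset.filter_subset _ _, ?_, ?_⟩
    · intro x hx y hy hxy
      rw [Finset.mem_filter] at hx hy
      rcases hxy with hxy | hxy
      · exact hrow x hx.1 y hy.1 hxy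
          (le_antisymm (hy.2 x hx.1 hxy) (hx.2 y hy.1 hxy.symm))
      · exact hcol x hx.1 y hy.1 hxy
          (le_antisymm (h y hy.1 x hx.1 hy.2 hx.2 hxy.symm) (h x hx.1 y hy.1 hx.2 hy.2 hxy))
    · intro y hy hyK
      obtain ⟨x, hx, hmax⟩ := Finset.exists_max_image {z ∈ S | row z = row y} rank
        ⟨y, by simp [hy]⟩
      simp only [Finset.mem_filter] at hx hmax hyK
      refine ⟨x, Finset.mem_filter.2 ⟨hx.1, fun z hz hzx => hmax z ⟨hz, hzx.trans hx.2⟩⟩,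
        Or.inl ⟨hx.2, ?_⟩⟩
      by_contra hlt
      exact hyK ⟨hy, fun z hz hzy => (hmax z ⟨hz, hzy⟩).trans (not_lt.1 hlt)⟩

open Classical in
theorem exists_list_colouring (S : Finset α) (L : α → Finset ℕ)
    (hrow : ∀ x ∈ S, ∀ y ∈ S, row x = row y → rank x = rank y → x = y)
    (hcol : ∀ x ∈ S, ∀ y ∈ S, col x = col y → rank x = rank y → x = y)
    (hL : ∀ x ∈ S, {y ∈ S | Precedes row col rank y x}.card < (L x).card) :
    ∃ c : α → ℕ, (∀ x ∈ S, c x ∈ L x) ∧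
      ∀ x ∈ S, ∀ y ∈ S, row x = row y ∨ col x = col y → c x = c y → x = y := by
  induction S using Finset.strongInduction generalizing L with
  | _ S ih =>
  obtain rfl | ⟨x₀, hx₀⟩ := S.eq_empty_or_nonempty
  · exact ⟨fun _ => 0, by simp, by simp⟩
  obtain ⟨a, ha⟩ := Finset.card_pos.1 (Nat.zero_lt_of_lt (hL x₀ hx₀))
  obtain ⟨K, hKS, hind, hK⟩ := exists_kernel row col rank {x ∈ S | a ∈ L x}
    (fun x hx y hy => hrow x (Finset.mem_filter.1 hx).1 y (Finset.mem_filter.1 hy).1)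
    (fun x hx y hy => hcol x (Finset.mem_filter.1 hx).1 y (Finset.mem_filter.1 hy).1)
  have hKne : K.Nonempty := by
    by_contra hne
    rw [Finset.not_nonempty_iff_eq_empty] at hne
    subst hne
    obtain ⟨x, hx, -⟩ := hK x₀ (Finset.mem_filter.2 ⟨hx₀, ha⟩) (by simp)
    simp at hx
  have hKS' : K ⊆ S := hKS.trans (Finset.filter_subset _ _)
  have hsub : S \ K ⊆ S := Finset.sdiff_subset
  obtain ⟨c, hc, hprop⟩ := ih (S \ K) (Finset.sdiff_ssubset hKS' hKne) (fun x => (L x).erase a)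
    (fun x hx y hy => hrow x (hsub hx) y (hsub hy)) (fun x hx y hy => hcol x (hsub hx) y (hsub hy))
    (by
      intro x hx
      have hxS := hL x (hsub hx)
      by_cases hax : a ∈ L x
      · obtain ⟨z, hz, hzx⟩ := hK x (Finset.mem_filter.2 ⟨hsub hx, hax⟩) (Finset.mem_sdiff.1 hx).2
        rw [Finset.card_erase_of_mem hax]
        have : {y ∈ S \ K | Precedes row col rank y x}.card <
            {y ∈ S | Precedes row col rank y x}.card := by
          apply Finset.card_lt_card
          refine (Finset.ssubset_iff_of_subset (Finset.filter_subset_filter _ hsub)).2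
            ⟨z, Finset.mem_filter.2 ⟨hKS' hz, hzx⟩, fun h => ?_⟩
          exact (Finset.mem_sdiff.1 (Finset.mem_filter.1 h).1).2 hz
        omega
      · rw [Finset.erase_eq_of_notMem hax]
        exact (Finset.card_le_card (Finset.filter_subset_filter _ hsub)).trans_lt hxS)
  have hne : ∀ x ∈ S, x ∉ K → c x ≠ a := fun x hx hxK =>
    Finset.ne_of_mem_erase (hc x (Finset.mem_sdiff.2 ⟨hx, hxK⟩))
  refine ⟨fun x => if x ∈ K then a else c x, fun x hx => ?_, fun x hx y hy hxy h => ?_⟩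
  · by_cases hxK : x ∈ K
    · simpa [hxK] using (Finset.mem_filter.1 (hKS hxK)).2
    · simpa [hxK] using Finset.mem_of_mem_erase (hc x (Finset.mem_sdiff.2 ⟨hx, hxK⟩))
  · by_cases hxK : x ∈ K <;> by_cases hyK : y ∈ K <;> simp only [hxK, hyK, if_true, if_false] at h
    · exact hind x hxK y hyK hxy
    · exact (hne y hy hyK h.symm).elim
    · exact (hne x hx hxK h).elim
    · exact hprop x (Finset.mem_sdiff.2 ⟨hx, hxK⟩) y (Finset.mem_sdiff.2 ⟨hy, hyK⟩) hxy h

end Galvin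

theorem add_mod_right_cancel {k i j j' : ℕ} (hj : j < k) (hj' : j' < k)
    (h : (i + j) % k = (i + j') % k) : j = j' :=
  Nat.ModEq.eq_of_lt_of_lt (Nat.ModEq.add_left_cancel' i h) hj hj'

/-- The edges of `K_{k,k}` can be properly coloured from lists of `k` colours. -/
theorem exists_proper_list_colouring_bipartite {k : ℕ} (L : Fin k → Fin k → Finset ℕ)
    (hL : ∀ i j, k ≤ (L i j).card) :
    ∃ c : Fin k → Fin k → ℕ, (∀ i j, c i j ∈ L i j) ∧
      (∀ i j j', j ≠ j' → c i j ≠ c i j') ∧ ∀ i i' j, i ≠ i' → c i j ≠ c i' j := by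
  classical
  let row : Fin k × Fin k → ℕ := fun x => x.1
  let col : Fin k × Fin k → ℕ := fun x => x.2
  let rank : Fin k × Fin k → ℕ := fun x => (x.1 + x.2) % k
  have hrow : ∀ x y, row x = row y → rank x = rank y → x = y := by
    intro x y h1 h2
    have h1 : (x.1 : ℕ) = y.1 := h1
    have h2 : ((x.1 : ℕ) + x.2) % k = (y.1 + y.2) % k := h2
    rw [h1] at h2
    exact Prod.ext (Fin.ext h1) (Fin.ext (add_mod_right_cancel x.2.2 y.2.2 h2))
  have hcol : ∀ x y, col x = col y → rank x = rank y → x = y := by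
    intro x y h1 h2
    have h1 : (x.2 : ℕ) = y.2 := h1
    have h2 : ((x.1 : ℕ) + x.2) % k = (y.1 + y.2) % k := h2
    rw [h1, add_comm (x.1 : ℕ), add_comm (y.1 : ℕ)] at h2
    exact Prod.ext (Fin.ext (add_mod_right_cancel x.1.2 y.1.2 h2)) (Fin.ext h1)
  obtain ⟨c, hc, hprop⟩ := exists_list_colouring row col rank Finset.univ (fun x => L x.1 x.2)
    (fun x _ y _ => hrow x y) (fun x _ y _ => hcol x y) (by
      intro x _
      have hlt : ∀ y, rank y < k := fun y => Nat.mod_lt _ (by have := y.1.2; omega)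
      refine lt_of_lt_of_le ?_ (hL x.1 x.2)
      calc _ ≤ ((Finset.range k).erase (rank x)).card := by
            apply Finset.card_le_card_of_injOn rank
            · intro y hy
              have hy := (Finset.mem_filter.1 hy).2
              refine Finset.mem_erase.2 ⟨?_, Finset.mem_range.2 (hlt y)⟩
              rcases hy with ⟨-, h⟩ | ⟨-, h⟩ <;> omega
            · intro y hy z hz h
              have hy := (Finset.mem_filter.1 hy).2
              have hz := (Finset.mem_filter.1 hz).2
              rcases hy with ⟨h1, h2⟩ | ⟨h1, h2⟩ <;> rcases hz with ⟨h3, h4⟩ | ⟨h3, h4⟩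
              · exact hrow y z (h1.trans h3.symm) h
              · omega
              · omega
              · exact hcol y z (h1.trans h3.symm) h
        _ < k := by
            have := hlt x
            rw [Finset.card_erase_of_mem (Finset.mem_range.2 (hlt x)), Finset.card_range]
            omega)
  refine ⟨fun i j => c (i, j), fun i j => hc (i, j) (Finset.mem_univ _), fun i j j' hne h => hne ?_,
    fun i i' j hne h => hne ?_⟩
  · exact (Prod.ext_iff.1 (hprop (i, j) (Finset.mem_univ _) (i, j') (Finset.mem_univ _)
      (Or.inl rfl) h)).2
  · exact (Prod.ext_iff.1 (hprop (i, j) (Finset.mem_univ _) (i', j) (Finset.mem_univ _)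
      (Or.inr rfl) h)).1

/-- From lists of `k` colours one can colour a complete graph so that, when its vertices are
grouped into blocks of `k` consecutive ones, no vertex sends two edges of one colour into the
same block. -/
theorem exists_blockwise_proper_colouring {n k : ℕ} (hk : 1 ≤ k) (L : Sym2 (Fin n) → Finset ℕ)
    (hL : ∀ e, ¬ e.IsDiag → (L e).card = k) :
    ∃ c : Sym2 (Fin n) → ℕ, (∀ e, ¬ e.IsDiag → c e ∈ L e) ∧
      ∀ x a b : Fin n, a ≠ x → b ≠ x → a ≠ b → (a : ℕ) / k = (b : ℕ) / k →
        c s(x, a) ≠ c s(x, b) := by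
  classical
  let M : ℕ → ℕ → Finset ℕ := fun a b =>
    if h : a < n ∧ b < n then
      if a = b then Finset.range k else L s(⟨a, h.1⟩, ⟨b, h.2⟩)
    else Finset.range k
  have hMcard : ∀ a b, (M a b).card = k := by
    intro a b
    dsimp only [M]
    split_ifs with h1 h2
    · simp
    · exact hL _ (by simpa using h2)
    · simp
  have hMcomm : ∀ a b, M a b = M b a := by
    intro a b
    dsimp only [M]
    by_cases h : a < n ∧ b < n
    · rw [dif_pos h, dif_pos h.symm, Sym2.eq_swap]
      simp only [eq_comm]
    · rw [dif_neg h, dif_neg fun h' => h h'.symm]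
  have hM : ∀ a b : Fin n, a ≠ b → M a b = L s(a, b) := by
    intro a b hab
    simp [M, Fin.val_inj, hab]
  choose B hBmem hBrow hBcol using fun p q : ℕ => exists_proper_list_colouring_bipartite
    (fun i j : Fin k => M (k * p + i) (k * q + j)) (fun i j => (hMcard _ _).ge)
  choose D hDmem hD using fun p : ℕ => exists_proper_list_colouring_complete
    (Sym2.lift ⟨fun i j : Fin k => M (k * p + i) (k * p + j), fun i j => hMcomm _ _⟩)
    (fun e _ => e.ind fun i j => (hMcard _ _).ge)
  let pos : Fin n → Fin k := fun a => ⟨a % k, Nat.mod_lt _ hk⟩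
  have hpos : ∀ a : Fin n, k * (a / k) + (pos a : ℕ) = a := fun a => Nat.div_add_mod _ _
  have hne : ∀ {a b : Fin n}, a ≠ b → (a : ℕ) / k = b / k → pos a ≠ pos b := by
    intro a b hab h e
    apply hab
    rw [Fin.ext_iff, ← hpos a, ← hpos b, h, e]
  let c : Fin n → Fin n → ℕ := fun a b =>
    if (a : ℕ) / k = b / k then D (a / k) s(pos a, pos b)
    else if (a : ℕ) / k < b / k then B (a / k) (b / k) (pos a) (pos b)
    else B (b / k) (a / k) (pos b) (pos a)
  have hcomm : ∀ a b, c a b = c b a := by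
    intro a b
    dsimp only [c]
    rcases lt_trichotomy ((a : ℕ) / k) (b / k) with h | h | h
    · rw [if_neg h.ne, if_pos h, if_neg h.ne', if_neg h.not_gt]
    · rw [if_pos h, if_pos h.symm, h, Sym2.eq_swap]
    · rw [if_neg h.ne', if_neg h.not_gt, if_neg h.ne, if_pos h]
  refine ⟨Sym2.lift ⟨c, hcomm⟩, fun e => ?_, fun x a b hax hbx hab h => ?_⟩
  · induction e with | _ a b =>
    intro hab
    have hab : a ≠ b := by simpa using hab
    rw [Sym2.lift_mk, ← hM a b hab]
    dsimp only [c]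
    split_ifs with h1 h2
    · have := hDmem (a / k) s(pos a, pos b) (by simpa using hne hab h1)
      rw [Sym2.lift_mk] at this
      dsimp only at this
      rw [hpos, h1, hpos] at this
      rwa [h1]
    · have := hBmem (a / k) (b / k) (pos a) (pos b)
      rwa [hpos, hpos] at this
    · have := hBmem (b / k) (a / k) (pos b) (pos a)
      rwa [hpos, hpos, hMcomm] at this
  · rw [Sym2.lift_mk, Sym2.lift_mk]
    dsimp only [c]
    rw [h]
    split_ifs with h1 h2
    · exact hD _ _ _ _ (hne hax (h.trans h1.symm)) (hne hbx h1.symm) (hne hab h)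
    · exact hBrow _ _ _ _ _ (hne hab h)
    · exact hBcol _ _ _ _ _ (hne hab h)

theorem starGraph_adj_zero_succ {r : ℕ} (i : Fin r) : (starGraph r).Adj 0 i.succ := by
  simp [starGraph, (Fin.succ_ne_zero i).symm]

/-- Among many edges at a vertex some `r` have the same colour. -/
theorem hasMonoCopy_starGraph {r k : ℕ} (hk : 1 ≤ k) (c : Sym2 (Fin (k * r + 1)) → ℕ)
    (hc : ∀ e, ¬ e.IsDiag → c e ∈ Finset.range k) : HasMonoCopy (starGraph r) c := by
  obtain ⟨y, -, hy⟩ := Finset.exists_le_card_fiber_of_mul_le_card_of_maps_to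
    (s := (Finset.univ : Finset (Fin (k * r)))) (t := Finset.range k)
    (f := fun j => c s(0, j.succ)) (n := r)
    (fun j _ => hc _ (by simpa using (Fin.succ_ne_zero j).symm))
    (Finset.nonempty_range_iff.2 (by omega)) (by simp)
  obtain ⟨T, hT, hTcard⟩ := Finset.exists_subset_card_eq hy
  let g := T.orderEmbOfFin hTcard
  have hg : ∀ i, c s(0, (g i).succ) = y := fun i =>
    (Finset.mem_filter.1 (hT (T.orderEmbOfFin_mem hTcard i))).2
  refine ⟨Fin.cons 0 fun i => (g i).succ, y, ?_, ?_⟩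
  · rw [Fin.cons_injective_iff]
    refine ⟨?_, (Fin.succ_injective _).comp g.injective⟩
    rintro ⟨i, hi⟩
    exact Fin.succ_ne_zero _ hi
  · intro a b hab
    rw [starGraph, SimpleGraph.fromRel_adj] at hab
    obtain ⟨hne, rfl | rfl⟩ := hab
    · obtain ⟨i, rfl⟩ := Fin.exists_succ_eq.2 hne.symm
      simpa using hg i
    · obtain ⟨i, rfl⟩ := Fin.exists_succ_eq.2 hne
      rw [Sym2.eq_swap]
      simpa using hg i

theorem list_ramsey_star_lower_bound (r k : ℕ) (hr : 1 ≤ r) (hk : 1 ≤ k) :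
    (r - 1) * k + 1 ≤ listRamsey (starGraph r) k := by
  apply le_csInf
  · exact ⟨k * r + 1, fun _ => Finset.range k, by simp, fun c hc => hasMonoCopy_starGraph hk c hc⟩
  · rintro n ⟨L, hL, hmono⟩
    by_contra! hn
    obtain ⟨c, hc, hprop⟩ := exists_blockwise_proper_colouring hk L hL
    obtain ⟨f, x, hf, hfx⟩ := hmono c hc
    have hblock : ∀ i : Fin r, (f i.succ : ℕ) / k < r - 1 := fun i =>
      Nat.div_lt_of_lt_mul (by have := (f i.succ).2; rw [mul_comm]; omega)
    obtain ⟨i, j, hij, h⟩ := Fintype.exists_ne_map_eq_of_card_lt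
      (fun i : Fin r => (⟨f i.succ / k, hblock i⟩ : Fin (r - 1))) (by simp; omega)
    refine hprop (f 0) (f i.succ) (f j.succ) (hf.ne (Fin.succ_ne_zero i))
      (hf.ne (Fin.succ_ne_zero j)) (hf.ne fun e => hij (Fin.succ_injective _ e))
      (Fin.ext_iff.1 h) ?_
    rw [hfx _ _ (starGraph_adj_zero_succ i), hfx _ _ (starGraph_adj_zero_succ j)]
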